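/- Let Γ = (V,E) be a simple finite connected graph, q : V → ℝ a potential, and H(Γ) = Q − C the discrete Schrödinger operator, where Q = diag(q) and C is the adjacency matrix of Γ. Let β = |E| − |V| + 1, fix a spanning tree of Γ, and let S = {e_1, …, e_β} be the edges not in the tree, with e_j = (u_j, v_j), u_j < v_j. For α = (α_1,…,α_β) ∈ ℝ^β let H(Γ^α_mag) be the Hermitian matrix with diagonal entries q_u, entries −1 at positions (u,v),(v,u) for edges (u,v) ∈ E∖S, entries −e^{iα_j} at (u_j,v_j) and −e^{−iα_j} at (v_j,u_j) for e_j ∈ S, and 0 elsewhere. Suppose λ_n(H(Γ)) is a simple eigenvalue whose eigenvector is nonzero at every vertex. Then the function α ↦ λ_n(H(Γ^α_mag)) is differentiable in a neighborhood of α = 0 and α = 0 is a critical point of it: all its partial derivatives ∂λ_n/∂α_j vanish at 0. -/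

import Mathlib

open Matrix

/-- The eigenvalues of a Hermitian matrix, sorted in increasing order and counted with
multiplicity (junk value `0` if the matrix is not Hermitian); `sE M i` is the `i`-th sorted
eigenvalue, 0-based, with junk value `0` out of range. -/
noncomputable def sortedEigs {𝕜 : Type*} [RCLike 𝕜] {d : ℕ} (M : Matrix (Fin d) (Fin d) 𝕜) :
    Fin d → ℝ :=
  if h : M.IsHermitian then h.eigenvalues ∘ Tuple.sort h.eigenvalues else 0

noncomputable def sE {𝕜 : Type*} [RCLike 𝕜] {d : ℕ} (M : Matrix (Fin d) (Fin d) 𝕜)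
    (i : ℕ) : ℝ :=
  if h : i < d then sortedEigs M ⟨i, h⟩ else 0

/-- The discrete Schrödinger operator `H(Γ) = Q - C` of a graph `G` with potential `q`. -/
noncomputable def schrodOp {N : ℕ} (G : SimpleGraph (Fin N)) [DecidableRel G.Adj]
    (q : Fin N → ℝ) : Matrix (Fin N) (Fin N) ℝ :=
  Matrix.diagonal q - G.adjMatrix ℝ

/-- The cut operator `H(Γ^cut_γ)`: for each `j`, the matrix entries at `(uE j, vE j)` and
`(vE j, uE j)` (equal to `-1` in `H(Γ)`) are replaced by `0` and the diagonal entries at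
`uE j`, `vE j` are decreased by `γ j` and `(γ j)⁻¹` respectively. -/
noncomputable def schrodCut {N β : ℕ} (G : SimpleGraph (Fin N)) [DecidableRel G.Adj]
    (q : Fin N → ℝ) (uE vE : Fin β → Fin N) (γ : Fin β → ℝ) :
    Matrix (Fin N) (Fin N) ℝ :=
  schrodOp G q - ∑ j : Fin β, Matrix.of (fun a b =>
    if a = uE j ∧ b = uE j then γ j
    else if a = vE j ∧ b = vE j then (γ j)⁻¹
    else if (a = uE j ∧ b = vE j) ∨ (a = vE j ∧ b = uE j) then -1
    else 0)

/-- The magnetic operator `H(Γ^α_mag)`: the entries of `H(Γ)` at `(uE j, vE j)` and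
`(vE j, uE j)` (equal to `-1`) are replaced by `-exp(i α j)` and `-exp(-i α j)`. -/
noncomputable def schrodMag {N β : ℕ} (G : SimpleGraph (Fin N)) [DecidableRel G.Adj]
    (q : Fin N → ℝ) (uE vE : Fin β → Fin N) (α : Fin β → ℝ) :
    Matrix (Fin N) (Fin N) ℂ :=
  (schrodOp G q).map (fun x => (x : ℂ)) + ∑ j : Fin β, Matrix.of (fun a b =>
    if a = uE j ∧ b = vE j then 1 - Complex.exp (Complex.I * (α j : ℝ))
    else if a = vE j ∧ b = uE j then 1 - Complex.exp (-(Complex.I * (α j : ℝ)))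
    else 0)

/-- The number of sign changes ("zeros") of a vertex function `f`: the number of edges of `G`
at whose endpoints `f` has different signs. -/
noncomputable def signChanges {N : ℕ} (G : SimpleGraph (Fin N)) (f : Fin N → ℝ) : ℕ :=
  {e : Sym2 (Fin N) | e ∈ G.edgeSet ∧ ∀ u v : Fin N, e = s(u, v) → f u * f v < 0}.ncard

/-!
The entries of `H(Γ^α_mag)` are analytic in `α`. The sorted eigenvalues of a Hermitian matrix depend
continuously on it, and a simple one is a simple root of the characteristic polynomial, whose
coefficients are real; the implicit function theorem then makes it as smooth in `α` as the matrix
entries. Since `H(Γ^{-α}_mag)` is the transpose of `H(Γ^α_mag)`, both have the same spectrum, so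
each `λ_n` is an even function of `α` and its derivative at `0`, wherever it exists, must vanish.
-/

open Filter Module Polynomial Topology
open scoped ContDiff

section Calculus

variable {𝕜 E F : Type*} [NontriviallyNormedField 𝕜]
  [NormedAddCommGroup E] [NormedSpace 𝕜 E] [NormedAddCommGroup F] [NormedSpace 𝕜 F]

theorem fderiv_zero_eq_zero_of_even [CharZero 𝕜] {f : E → F} (hf : f.Even) :
    fderiv 𝕜 f 0 = 0 := by
  have hneg : fderiv 𝕜 f 0 = -fderiv 𝕜 f 0 := by
    have h := fderiv_comp_smul (𝕜 := 𝕜) (f := f) (x := 0) (-1)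
    simpa only [neg_smul, one_smul, hf _, neg_zero] using h
  have : IsAddTorsionFree (E →L[𝕜] F) := .of_isTorsionFree 𝕜 _
  exact self_eq_neg.1 hneg

theorem isInvertible_fderiv_comp_inr {f : E × 𝕜 → 𝕜} {x : E} {y c : 𝕜}
    (hf : DifferentiableAt 𝕜 f (x, y)) (hc : c ≠ 0) (hd : HasDerivAt (fun z => f (x, z)) c y) :
    (fderiv 𝕜 f (x, y) ∘L .inr 𝕜 E 𝕜).IsInvertible := by
  have hpartial : fderiv 𝕜 f (x, y) (0, 1) = c :=
    (hf.hasFDerivAt.comp_hasDerivAt y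
      ((hasDerivAt_const y x).prodMk (hasDerivAt_id y))).unique hd
  refine ⟨ContinuousLinearEquiv.unitsEquivAut 𝕜 (Units.mk0 c hc), ?_⟩
  ext
  simp [hpartial]

theorem contDiffAt_of_eventually_apply_eq {𝕜 E F G : Type*} [RCLike 𝕜]
    [NormedAddCommGroup E] [NormedSpace 𝕜 E] [CompleteSpace E]
    [NormedAddCommGroup F] [NormedSpace 𝕜 F] [CompleteSpace F]
    [NormedAddCommGroup G] [NormedSpace 𝕜 G] [CompleteSpace G]
    {n : ℕ∞ω} (hn : n ≠ 0) {f : E × F → G} {g : E → F} {x : E}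
    (hf : ContDiffAt 𝕜 n f (x, g x))
    (hinv : (fderiv 𝕜 f (x, g x) ∘L .inr 𝕜 E F).IsInvertible)
    (hg : ContinuousAt g x) (hfg : ∀ᶠ y in 𝓝 x, f (y, g y) = f (x, g x)) :
    ContDiffAt 𝕜 n g x := by
  have hgraph : Tendsto (fun y => (y, g y)) (𝓝 x) (𝓝 (x, g x)) := continuousAt_id.prodMk hg
  refine (hf.contDiffAt_implicitFunction hn hinv).congr_of_eventuallyEq ?_
  filter_upwards [hfg, hgraph.eventually (hf.eventually_apply_eq_iff_implicitFunction hn hinv)]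
    with y hy hiff
  exact (hiff.1 hy).symm

theorem contDiffAt_det {A m : Type*} [NormedCommRing A] [NormedAlgebra 𝕜 A] [Fintype m]
    [DecidableEq m] {n : ℕ∞ω} {M : E → Matrix m m A} {x : E}
    (hM : ∀ a b, ContDiffAt 𝕜 n (fun y => M y a b) x) :
    ContDiffAt 𝕜 n (fun y => (M y).det) x := by
  simp_rw [Matrix.det_apply]
  exact .sum fun σ _ => (contDiffAt_prod fun i _ => hM _ _).const_smul _

theorem contDiffAt_eval_charpoly {A m : Type*} [NormedCommRing A] [NormedAlgebra 𝕜 A] [Fintype m]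
    [DecidableEq m] {n : ℕ∞ω} {M : E → Matrix m m A} {t : E → A} {x : E}
    (ht : ContDiffAt 𝕜 n t x) (hM : ∀ a b, ContDiffAt 𝕜 n (fun y => M y a b) x) :
    ContDiffAt 𝕜 n (fun y => (M y).charpoly.eval (t y)) x := by
  simp only [Matrix.eval_charpoly]
  refine contDiffAt_det fun a b => ?_
  have hscalar : ContDiffAt 𝕜 n (fun y => scalar m (t y) a b) x := by
    by_cases hab : a = b
    · simpa [hab] using ht
    · simpa [hab] using contDiffAt_const
  exact hscalar.sub (hM a b)

theorem hasDerivAt_prod_sub {ι : Type*} [Fintype ι] [DecidableEq ι] (e : ι → 𝕜) (i : ι) :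
    HasDerivAt (fun y => ∏ k, (y - e k)) (∏ k ∈ Finset.univ.erase i, (e i - e k)) (e i) := by
  have h := HasDerivAt.fun_finsetProd (u := Finset.univ) (x := e i)
    fun k _ => (hasDerivAt_id (e i)).sub_const (e k)
  rw [Finset.sum_eq_single i] at h
  · simpa using h
  · intro k _ hk
    rw [Finset.prod_eq_zero (Finset.mem_erase.2 ⟨hk.symm, Finset.mem_univ i⟩) (sub_self _),
      zero_smul]
  · simp

end Calculus

section SortedEigs

variable {𝕜 : Type*} [RCLike 𝕜] {d : ℕ}

theorem sE_eq_sortedEigs (A : Matrix (Fin d) (Fin d) 𝕜) {k : ℕ} (hk : k < d) :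
    sE A k = sortedEigs A ⟨k, hk⟩ :=
  dif_pos hk

theorem sortedEigs_monotone (A : Matrix (Fin d) (Fin d) 𝕜) : Monotone (sortedEigs A) := by
  unfold sortedEigs
  split_ifs with hA
  · exact Tuple.monotone_sort hA.eigenvalues
  · exact monotone_const

theorem charpoly_eq_prod_sortedEigs {A : Matrix (Fin d) (Fin d) 𝕜} (hA : A.IsHermitian) :
    A.charpoly = ∏ i, (X - C (sortedEigs A i : 𝕜)) := by
  rw [hA.charpoly_eq, sortedEigs, dif_pos hA]
  exact (Equiv.prod_comp (Tuple.sort hA.eigenvalues) fun i => X - C (hA.eigenvalues i : 𝕜)).symm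

theorem eval_charpoly_eq_prod_sortedEigs {A : Matrix (Fin d) (Fin d) 𝕜} (hA : A.IsHermitian)
    (y : 𝕜) : A.charpoly.eval y = ∏ i, (y - sortedEigs A i) := by
  simp [charpoly_eq_prod_sortedEigs hA, eval_prod]

theorem sortedEigs_eq_of_charpoly_eq {A : Matrix (Fin d) (Fin d) 𝕜} (hA : A.IsHermitian)
    {a : Fin d → ℝ} (ha : Monotone a) (h : A.charpoly = ∏ i, (X - C (a i : 𝕜))) :
    sortedEigs A = a := by
  have hroots : ∀ b : Fin d → ℝ, (∏ i, (X - C (b i : 𝕜))).roots.map RCLike.re =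
      (List.ofFn b : Multiset ℝ) := by
    intro b
    rw [roots_prod _ _ (Finset.prod_ne_zero_iff.2 fun i _ => X_sub_C_ne_zero _)]
    simp [Function.comp_def, Fin.univ_val_map]
  have hperm : (List.ofFn (sortedEigs A)).Perm (List.ofFn a) := by
    rw [← Multiset.coe_eq_coe, ← hroots, ← hroots, ← charpoly_eq_prod_sortedEigs hA, h]
  exact List.ofFn_injective (hperm.eq_of_pairwise'
    (sortedEigs_monotone A).sortedLE_ofFn.pairwise ha.sortedLE_ofFn.pairwise)

theorem sortedEigs_transpose {A : Matrix (Fin d) (Fin d) 𝕜} (hA : A.IsHermitian) :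
    sortedEigs Aᵀ = sortedEigs A :=
  sortedEigs_eq_of_charpoly_eq hA.transpose (sortedEigs_monotone A) <| by
    rw [charpoly_transpose, charpoly_eq_prod_sortedEigs hA]

theorem sortedEigs_map_algebraMap {A : Matrix (Fin d) (Fin d) ℝ} (hA : A.IsHermitian) :
    sortedEigs (A.map (algebraMap ℝ 𝕜)) = sortedEigs A := by
  refine sortedEigs_eq_of_charpoly_eq (hA.map _ fun x => by simp) (sortedEigs_monotone A) ?_
  rw [charpoly_map, charpoly_eq_prod_sortedEigs hA]
  simp [Polynomial.map_prod]

open scoped Matrix.Norms.L2Operator in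
theorem norm_sortedEigs_le {A : Matrix (Fin d) (Fin d) 𝕜} (hA : A.IsHermitian) :
    ‖sortedEigs A‖ ≤ ‖A‖ := by
  refine (pi_norm_le_iff_of_nonneg (norm_nonneg A)).2 fun i => ?_
  have : Nonempty (Fin d) := ⟨i⟩
  rw [sortedEigs, dif_pos hA]
  have hmem := spectrum.algebraMap_mem 𝕜 (hA.eigenvalues_mem_spectrum_real
    (Tuple.sort hA.eigenvalues i))
  simpa using spectrum.norm_le_norm_of_mem hmem

theorem sortedEigs_eq_of_tendsto {ι : Type*} {l : Filter ι} [l.NeBot]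
    {B : ι → Matrix (Fin d) (Fin d) 𝕜} {A : Matrix (Fin d) (Fin d) 𝕜} {a : Fin d → ℝ}
    (hB : ∀ᶠ t in l, (B t).IsHermitian) (hA : A.IsHermitian) (hBA : Tendsto B l (𝓝 A))
    (ha : Tendsto (fun t => sortedEigs (B t)) l (𝓝 a)) : sortedEigs A = a := by
  have hmono : Monotone a :=
    isClosed_monotone.mem_of_tendsto ha (.of_forall fun t => sortedEigs_monotone (B t))
  refine sortedEigs_eq_of_charpoly_eq hA hmono (Polynomial.funext fun y => ?_)
  have hdet : Tendsto (fun t => (B t).charpoly.eval y) l (𝓝 (A.charpoly.eval y)) := by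
    simp only [Matrix.eval_charpoly]
    exact ((continuous_const.sub continuous_id).matrix_det.tendsto A).comp hBA
  have hprod : Tendsto (fun t => (B t).charpoly.eval y) l (𝓝 (∏ i, (y - a i))) := by
    have hcont : Continuous fun b : Fin d → ℝ => ∏ i, (y - (b i : 𝕜)) := by fun_prop
    refine ((hcont.tendsto a).comp ha).congr' ?_
    filter_upwards [hB] with t ht
    exact (eval_charpoly_eq_prod_sortedEigs ht y).symm
  rw [tendsto_nhds_unique hdet hprod]
  simp [eval_prod]

open scoped Matrix.Norms.L2Operator in
theorem continuousOn_sortedEigs :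
    ContinuousOn (sortedEigs (𝕜 := 𝕜) (d := d)) {A | A.IsHermitian} := by
  intro A hA
  -- The eigenvalues are bounded near `A`, so they converge along any ultrafilter tending to `A`.
  refine tendsto_iff_ultrafilter _ _ _ |>.2 fun u hu => ?_
  have huA : Tendsto id (u : Filter (Matrix (Fin d) (Fin d) 𝕜)) (𝓝 A) :=
    hu.trans nhdsWithin_le_nhds
  have hherm : {B : Matrix (Fin d) (Fin d) 𝕜 | B.IsHermitian} ∈ u := hu self_mem_nhdsWithin
  have hbdd : sortedEigs ⁻¹' Metric.closedBall 0 (‖A‖ + 1) ∈ u := by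
    filter_upwards [hherm, huA.norm.eventually_lt_const (lt_add_one ‖A‖)] with B hB hBA
    exact mem_closedBall_zero_iff.2 ((norm_sortedEigs_le hB).trans hBA.le)
  obtain ⟨a, -, ha⟩ := (isCompact_closedBall (0 : Fin d → ℝ) (‖A‖ + 1)).ultrafilter_le_nhds
    (u.map sortedEigs) (le_principal_iff.2 hbdd)
  rwa [sortedEigs_eq_of_tendsto hherm hA huA ha]

theorem card_sortedEigs_eq_finrank_eigenspace {A : Matrix (Fin d) (Fin d) 𝕜}
    (hA : A.IsHermitian) (μ : ℝ) :
    Finset.card {i | sortedEigs A i = μ} = finrank 𝕜 (End.eigenspace (toLin' A) (μ : 𝕜)) := by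
  have heigenspace : (End.eigenspace (toEuclideanLin A) (μ : 𝕜)).map
      (WithLp.linearEquiv 2 𝕜 (Fin d → 𝕜)).toLinearMap = End.eigenspace (toLin' A) (μ : 𝕜) := by
    ext v
    simp [Submodule.mem_map_equiv, ← WithLp.toLp_smul]
  rw [← heigenspace, LinearEquiv.finrank_map_eq,
    ← (isSymmetric_toEuclideanLin_iff.2 hA).card_filter_eigenvalues_eq finrank_euclideanSpace,
    sortedEigs, dif_pos hA]
  -- `IsHermitian.eigenvalues` is a reindexing of `LinearMap.IsSymmetric.eigenvalues`.
  refine Finset.card_equiv ((Tuple.sort hA.eigenvalues).trans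
    (Fintype.equivOfCardEq (Fintype.card_fin _)).symm) fun i => ?_
  rw [Finset.mem_filter_univ, Finset.mem_filter_univ]
  exact RCLike.ofReal_inj.symm

theorem sortedEigs_ne_of_finrank_eigenspace_eq_one {A : Matrix (Fin d) (Fin d) 𝕜}
    (hA : A.IsHermitian) {i j : Fin d} (hij : j ≠ i)
    (hi : finrank 𝕜 (End.eigenspace (toLin' A) (sortedEigs A i : 𝕜)) = 1) :
    sortedEigs A j ≠ sortedEigs A i := by
  rw [← card_sortedEigs_eq_finrank_eigenspace hA] at hi
  exact fun h => hij (Finset.card_le_one.1 hi.le j (by simpa using h) i (by simp))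

variable {E : Type*} [NormedAddCommGroup E] [NormedSpace ℝ E]

theorem contDiffAt_sortedEigs [CompleteSpace E] {n : ℕ∞ω} (hn : n ≠ 0)
    {M : E → Matrix (Fin d) (Fin d) 𝕜} {x : E} (hherm : ∀ᶠ y in 𝓝 x, (M y).IsHermitian)
    (hM : ∀ a b, ContDiffAt ℝ n (fun y => M y a b) x) {i : Fin d}
    (hi : ∀ j ≠ i, sortedEigs (M x) j ≠ sortedEigs (M x) i) :
    ContDiffAt ℝ n (fun y => sortedEigs (M y) i) x := by
  let f : E × ℝ → ℝ := fun p => RCLike.re ((M p.1).charpoly.eval (p.2 : 𝕜))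
  have hf_eq : ∀ y, (M y).IsHermitian → ∀ t, f (y, t) = ∏ k, (t - sortedEigs (M y) k) := by
    intro y hy t
    simp only [f, eval_charpoly_eq_prod_sortedEigs hy]
    exact_mod_cast RCLike.ofReal_re (K := 𝕜) _
  have hf_root : ∀ y, (M y).IsHermitian → f (y, sortedEigs (M y) i) = 0 := fun y hy =>
    (hf_eq y hy _).trans (Finset.prod_eq_zero (Finset.mem_univ i) (sub_self _))
  have hf : ContDiffAt ℝ n f (x, sortedEigs (M x) i) := by
    have hsnd : ContDiff ℝ n fun p : E × ℝ => (p.2 : 𝕜) :=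
      (RCLike.ofRealCLM (K := 𝕜)).contDiff.comp contDiff_snd
    have heval := contDiffAt_eval_charpoly (M := fun p : E × ℝ => M p.1) hsnd.contDiffAt
      fun a b => (hM a b).comp (x, sortedEigs (M x) i) contDiffAt_fst
    exact (RCLike.reCLM (K := 𝕜)).contDiff.contDiffAt.comp _ heval
  have hx := hherm.self_of_nhds
  have hderiv : HasDerivAt (fun t => f (x, t))
      (∏ k ∈ Finset.univ.erase i, (sortedEigs (M x) i - sortedEigs (M x) k))
      (sortedEigs (M x) i) := by
    simpa only [hf_eq x hx] using hasDerivAt_prod_sub (sortedEigs (M x)) i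
  have hderiv_ne : ∏ k ∈ Finset.univ.erase i, (sortedEigs (M x) i - sortedEigs (M x) k) ≠ 0 :=
    Finset.prod_ne_zero_iff.2 fun k hk => sub_ne_zero.2 (hi k (Finset.ne_of_mem_erase hk)).symm
  have hcont : ContinuousAt (fun y => sortedEigs (M y) i) x := by
    have hMc : Tendsto M (𝓝 x) (𝓝[{A | A.IsHermitian}] M x) := tendsto_nhdsWithin_iff.2
      ⟨tendsto_pi_nhds.2 fun a => tendsto_pi_nhds.2 fun b => (hM a b).continuousAt, hherm⟩
    exact tendsto_pi_nhds.1 ((continuousOn_sortedEigs (M x) hx).tendsto.comp hMc) i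
  refine contDiffAt_of_eventually_apply_eq hn hf
    (isInvertible_fderiv_comp_inr (hf.differentiableAt hn) hderiv_ne hderiv) hcont ?_
  filter_upwards [hherm] with y hy
  rw [hf_root y hy, hf_root x hx]

end SortedEigs

section Schrodinger

variable {N β : ℕ} (G : SimpleGraph (Fin N)) [DecidableRel G.Adj] (q : Fin N → ℝ)
  (uE vE : Fin β → Fin N)

theorem schrodOp_isSymm : (schrodOp G q).IsSymm :=
  (isSymm_diagonal q).sub G.isSymm_adjMatrix

theorem schrodOp_isHermitian : (schrodOp G q).IsHermitian :=
  isHermitian_iff_isSymm.2 (schrodOp_isSymm G q)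

theorem schrodMag_apply (α : Fin β → ℝ) (a b : Fin N) :
    schrodMag G q uE vE α a b = schrodOp G q a b + ∑ j : Fin β,
      (if a = uE j ∧ b = vE j then 1 - Complex.exp (Complex.I * α j)
      else if a = vE j ∧ b = uE j then 1 - Complex.exp (-(Complex.I * α j))
      else 0) := by
  simp [schrodMag, Matrix.sum_apply]

theorem schrodMag_zero : schrodMag G q uE vE 0 = (schrodOp G q).map (algebraMap ℝ ℂ) := by
  ext a b
  simp [schrodMag_apply]

theorem schrodMag_map_star (α : Fin β → ℝ) :
    (schrodMag G q uE vE α).map star = schrodMag G q uE vE (-α) := by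
  ext a b
  simp [schrodMag_apply, apply_ite (starRingEnd ℂ), ← Complex.exp_conj]

theorem contDiff_schrodMag_apply {n : ℕ∞ω} (a b : Fin N) :
    ContDiff ℝ n fun α => schrodMag G q uE vE α a b := by
  have hcoord (j : Fin β) : ContDiff ℝ n fun α : Fin β → ℝ => (α j : ℂ) :=
    Complex.ofRealCLM.contDiff.comp (contDiff_apply ℝ ℝ j)
  simp_rw [schrodMag_apply]
  refine contDiff_const.add (ContDiff.sum fun j _ => ?_)
  split_ifs
  · exact contDiff_const.sub (contDiff_const.mul (hcoord j)).cexp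
  · exact contDiff_const.sub (contDiff_const.mul (hcoord j)).neg.cexp
  · exact contDiff_const

variable {uE vE}

theorem schrodMag_neg (hne : ∀ j, uE j ≠ vE j) (α : Fin β → ℝ) :
    schrodMag G q uE vE (-α) = (schrodMag G q uE vE α)ᵀ := by
  ext a b
  rw [transpose_apply, schrodMag_apply, schrodMag_apply, (schrodOp_isSymm G q).apply]
  congr 1
  refine Finset.sum_congr rfl fun j _ => ?_
  split_ifs <;> simp_all [hne j]

theorem schrodMag_isHermitian (hne : ∀ j, uE j ≠ vE j) (α : Fin β → ℝ) :
    (schrodMag G q uE vE α).IsHermitian := by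
  rw [IsHermitian, conjTranspose, ← schrodMag_neg G q hne, schrodMag_map_star, neg_neg]

theorem even_sortedEigs_schrodMag (hne : ∀ j, uE j ≠ vE j) (i : Fin N) :
    (fun α => sortedEigs (schrodMag G q uE vE α) i).Even := fun α => by
  simp only [schrodMag_neg G q hne, sortedEigs_transpose (schrodMag_isHermitian G q hne α)]

variable {G q}

theorem mag_eigenvalue_critical_point_general (hne : ∀ j, uE j ≠ vE j) {k : ℕ} (hk : k < N)
    (hsimple : finrank ℝ (End.eigenspace (toLin' (schrodOp G q)) (sE (schrodOp G q) k)) = 1) :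
    AnalyticAt ℝ (fun α => sE (schrodMag G q uE vE α) k) 0 ∧
    fderiv ℝ (fun α => sE (schrodMag G q uE vE α) k) 0 = 0 := by
  rw [sE_eq_sortedEigs _ hk] at hsimple
  simp only [sE_eq_sortedEigs _ hk]
  have hsep : ∀ j ≠ ⟨k, hk⟩, sortedEigs (schrodMag G q uE vE 0) j ≠
      sortedEigs (schrodMag G q uE vE 0) ⟨k, hk⟩ := by
    rw [schrodMag_zero, sortedEigs_map_algebraMap (schrodOp_isHermitian G q)]
    exact fun j hj =>
      sortedEigs_ne_of_finrank_eigenspace_eq_one (schrodOp_isHermitian G q) hj hsimple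
  have hsmooth : ContDiffAt ℝ ω (fun α => sortedEigs (schrodMag G q uE vE α) ⟨k, hk⟩) 0 :=
    contDiffAt_sortedEigs (by simp) (.of_forall (schrodMag_isHermitian G q hne))
      (fun a b => (contDiff_schrodMag_apply G q uE vE a b).contDiffAt) hsep
  exact ⟨hsmooth.analyticAt, fderiv_zero_eq_zero_of_even (even_sortedEigs_schrodMag G q hne _)⟩

end Schrodinger

/-- `α = 0` is a critical point of `α ↦ λ_n(H(Γ^α_mag))` (which is
differentiable in a neighborhood of `0`), provided `λ_n(H(Γ))` is simple with eigenvector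
nonzero at every vertex. -/
theorem mag_eigenvalue_critical_point {N β : ℕ} (G : SimpleGraph (Fin N))
    [DecidableRel G.Adj] (hconn : G.Connected) (q : Fin N → ℝ)
    (uE vE : Fin β → Fin N) (horder : ∀ j, uE j < vE j)
    (hadj : ∀ j, G.Adj (uE j) (vE j))
    (hdistinct : ∀ i j, s(uE i, vE i) = s(uE j, vE j) → i = j)
    (htree : (G.deleteEdges {e | ∃ j, e = s(uE j, vE j)}).IsTree)
    (hβ : β + N = G.edgeFinset.card + 1)
    (n : ℕ) (hn1 : 1 ≤ n) (hn2 : n ≤ N)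
    (f : Fin N → ℝ)
    (heig : (schrodOp G q).mulVec f = sE (schrodOp G q) (n - 1) • f)
    (hsimple : Module.finrank ℝ
      (Module.End.eigenspace (Matrix.toLin' (schrodOp G q)) (sE (schrodOp G q) (n - 1))) = 1)
    (hf0 : ∀ v, f v ≠ 0)
    (lamMag : (Fin β → ℝ) → ℝ)
    (hlamMag : lamMag = fun α => sE (schrodMag G q uE vE α) (n - 1)) :
    (∀ᶠ α in nhds (0 : Fin β → ℝ), DifferentiableAt ℝ lamMag α) ∧
    fderiv ℝ lamMag 0 = 0 := by
  obtain ⟨hanalytic, hcritical⟩ :=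
    mag_eigenvalue_critical_point_general (fun j => (horder j).ne) (by lia) hsimple
  subst hlamMag
  exact ⟨hanalytic.eventually_analyticAt.mono fun _ h => h.differentiableAt, hcritical⟩
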